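/- Let i ∈ F₉ satisfy i² = −1, and let λ, ρ, τ be the images in PGL(2,9) of the matrices [[−1,1],[1,1]], [[0,1+i],[−1,0]], [[1,1],[1,−1]] over F₉. Then the subgroup ⟨ρ,τ⟩ of PGL(2,9) is a dihedral group of order 20, it is a maximal subgroup of PGL(2,9), and λ ∉ ⟨ρ,τ⟩. -/

import Mathlib

open Matrix in
/-- The field with 9 elements. -/
noncomputable abbrev F9 : Type := GaloisField 3 2

open Matrix in
/-- `PGL(2,9)`: the quotient of `GL(2,F₉)` by its center. -/
abbrev PGL29 : Type := GL (Fin 2) F9 ⧸ Subgroup.center (GL (Fin 2) F9)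

/-!
The centralizer of an element `u` of `PGL(2, q)` with `u ^ 2 ≠ 1` has order at most
`q ^ 2 / (q - 1)`. Indeed a lift `A` of `u` is not scalar, and by Cayley–Hamilton its trace is
nonzero, so `g A g⁻¹ = c A` forces `c = 1`; hence the centralizer of `u` lifts to the centralizer
of `A`, whose elements `g` are determined by `g v` as soon as `v` and `A v` are independent. For
`q = 9` the bound is `10`.

Every subgroup `D` of order 20 of a group of order 720 with this centralizer bound is maximal. By
Sylow's congruence modulo 25, `D` is the normalizer of its subgroup of order 5, and a subgroup
containing `D` has order 20, 120 or 720. Similarly no subgroup has order 40. In a subgroup of order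
120 a Sylow 3-subgroup would be central in its normalizer, so Burnside's transfer theorem would give
a normal complement of order 40.

Finally `ρ` and `τ` are involutions whose product has order 10, whereas `(λτρ) ^ 20 ≠ 1` shows that
`λ` is not in the group of order 20 which they generate.
-/

open Subgroup

section Dihedral

variable {G : Type*} [Group G] {a b : G}

/-- The homomorphism `i ↦ g ^ i`, with the exponents read modulo the order of `g`. -/
noncomputable def zmodPowersHom (g : G) : Multiplicative (ZMod (orderOf g)) →* G :=
  AddMonoidHom.toMultiplicativeLeft
    (ZMod.lift (orderOf g) ⟨zmultiplesHom (Additive G) (.ofMul g), by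
      simp [← ofMul_pow, pow_orderOf_eq_one]⟩)

theorem zmodPowersHom_intCast (g : G) (k : ℤ) :
    zmodPowersHom g (.ofAdd (k : ZMod (orderOf g))) = g ^ k := by
  simp [zmodPowersHom]

theorem zmodPowersHom_injective (g : G) : Function.Injective (zmodPowersHom g) := by
  refine (injective_iff_map_eq_one _).2 fun x hx => ?_
  obtain ⟨k, hk⟩ := ZMod.intCast_surjective x.toAdd
  obtain rfl : .ofAdd (k : ZMod (orderOf g)) = x := hk
  rw [zmodPowersHom_intCast, ← orderOf_dvd_iff_zpow_eq_one] at hx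
  exact congrArg Multiplicative.ofAdd ((ZMod.intCast_zmod_eq_zero_iff_dvd k _).2 hx)

theorem zmodPowersHom_mem_zpowers (g : G) (x : Multiplicative (ZMod (orderOf g))) :
    zmodPowersHom g x ∈ zpowers g := by
  obtain ⟨k, hk⟩ := ZMod.intCast_surjective x.toAdd
  obtain rfl : .ofAdd (k : ZMod (orderOf g)) = x := hk
  exact ⟨k, (zmodPowersHom_intCast g k).symm⟩

theorem mul_eq_mul_inv_of_mem_zpowers (ha : a * a = 1) (hb : b * b = 1) {x : G}
    (hx : x ∈ zpowers (a * b)) : x * a = a * x⁻¹ := by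
  obtain ⟨k, rfl⟩ := hx
  have ha' : a⁻¹ = a := inv_eq_of_mul_eq_one_left ha
  have hb' : b⁻¹ = b := inv_eq_of_mul_eq_one_left hb
  have hconj : a * (a * b)⁻¹ * a⁻¹ = a * b := by
    rw [mul_inv_rev, ha', hb', mul_assoc, mul_assoc, ha, mul_one]
  calc (a * b) ^ k * a = (a * (a * b)⁻¹ * a⁻¹) ^ k * a := by rw [hconj]
    _ = a * ((a * b) ^ k)⁻¹ := by rw [conj_zpow, inv_mul_cancel_right, inv_zpow]

/-- The homomorphism from the dihedral group attached to two involutions `a` and `b`. It sends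
the rotation `r i` to `(a * b) ^ i` and the reflection `sr i` to `a * (a * b) ^ i`. -/
noncomputable def dihedralHom (ha : a * a = 1) (hb : b * b = 1) :
    DihedralGroup (orderOf (a * b)) →* G :=
  MonoidHom.mk'
    (fun
      | .r i => zmodPowersHom (a * b) (.ofAdd i)
      | .sr i => a * zmodPowersHom (a * b) (.ofAdd i)) <| by
    have swap (i : ZMod (orderOf (a * b))) : zmodPowersHom (a * b) (.ofAdd i) * a =
        a * (zmodPowersHom (a * b) (.ofAdd i))⁻¹ :=
      mul_eq_mul_inv_of_mem_zpowers ha hb (zmodPowersHom_mem_zpowers _ _)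
    have map_sub (i j : ZMod (orderOf (a * b))) : zmodPowersHom (a * b) (.ofAdd (j - i)) =
        (zmodPowersHom (a * b) (.ofAdd i))⁻¹ * zmodPowersHom (a * b) (.ofAdd j) := by
      rw [← neg_add_eq_sub, ofAdd_add, ofAdd_neg, map_mul, map_inv]
    rintro (i | i) (j | j)
    · simp only [DihedralGroup.r_mul_r, ofAdd_add, map_mul]
    · simp only [DihedralGroup.r_mul_sr, map_sub, ← mul_assoc, swap]
    · simp only [DihedralGroup.sr_mul_r, ofAdd_add, map_mul, mul_assoc]
    · simp only [DihedralGroup.sr_mul_sr, map_sub]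
      rw [mul_assoc, ← mul_assoc _ a, swap, ← mul_assoc, ← mul_assoc, ha, one_mul]

theorem dihedralHom_injective (ha : a * a = 1) (hb : b * b = 1) (hab : (a * b) ^ 2 ≠ 1) :
    Function.Injective (dihedralHom ha hb) := by
  refine (injective_iff_map_eq_one _).2 ?_
  rintro (i | i) h
  · exact congrArg DihedralGroup.r (zmodPowersHom_injective (a * b) (h.trans (map_one _).symm))
  · have ha_mem : a ∈ zpowers (a * b) :=
      (congrArg (· ∈ zpowers (a * b)) (eq_inv_of_mul_eq_one_left h)).mpr
        (inv_mem (zmodPowersHom_mem_zpowers (a * b) (.ofAdd i)))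
    have hcomm : a * b * a = a * (a * b) :=
      setLike_mul_comm (mem_zpowers (a * b)) ha_mem
    have hinv : a * b = (a * b)⁻¹ := mul_left_cancel <|
      hcomm.symm.trans (mul_eq_mul_inv_of_mem_zpowers ha hb (mem_zpowers (a * b)))
    exact absurd (by rw [sq, ← eq_inv_iff_mul_eq_one, ← hinv]) hab

theorem range_dihedralHom (ha : a * a = 1) (hb : b * b = 1) :
    (dihedralHom ha hb).range = closure {a, b} := by
  have ha_mem : a ∈ closure {a, b} := subset_closure (by simp)
  have hb_mem : b ∈ closure {a, b} := subset_closure (by simp)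
  refine le_antisymm ?_ ((closure_le _).2 ?_)
  · have hab_le : zpowers (a * b) ≤ closure {a, b} :=
      zpowers_le.2 (mul_mem ha_mem hb_mem)
    rintro _ ⟨i | i, rfl⟩
    · exact hab_le (zmodPowersHom_mem_zpowers _ _)
    · exact mul_mem ha_mem (hab_le (zmodPowersHom_mem_zpowers _ _))
  · have h0 : dihedralHom ha hb (.sr 0) = a := by simp [dihedralHom]
    have h1 : dihedralHom ha hb (.sr 1) = b := by
      have := zmodPowersHom_intCast (a * b) 1
      simp only [Int.cast_one, zpow_one] at this
      simp [dihedralHom, this, ← mul_assoc, ha]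
    rintro _ (rfl | rfl)
    exacts [⟨_, h0⟩, ⟨_, h1⟩]

theorem nonempty_closure_involutions_mulEquiv_dihedralGroup (ha : a * a = 1) (hb : b * b = 1)
    (hab : (a * b) ^ 2 ≠ 1) :
    Nonempty (closure {a, b} ≃* DihedralGroup (orderOf (a * b))) :=
  ⟨((MonoidHom.ofInjective (dihedralHom_injective ha hb hab)).trans
    (MulEquiv.subgroupCongr (range_dihedralHom ha hb))).symm⟩

end Dihedral

section Normalizers

variable {G : Type*} [Group G] [Finite G] {p : ℕ} [Fact p.Prime]

theorem card_normalizer_inf_modEq_card {n : ℕ} {P M : Subgroup G} (hP : Nat.card P = p ^ n)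
    (hPM : P ≤ M) : Nat.card (normalizer (P : Set G) ⊓ M : Subgroup G) ≡ Nat.card M
      [MOD p ^ (n + 1)] := by
  have hP' : Nat.card (P.subgroupOf M) = p ^ n :=
    (Nat.card_congr (subgroupOfEquivOfLe hPM).toEquiv).trans hP
  have h := Sylow.card_normalizer_modEq_card hP'
  rwa [← subgroupOf_normalizer_eq hPM, ← card_map_of_injective M.subtype_injective,
    subgroupOf_map_subtype] at h

omit [Fact p.Prime] in
theorem card_normalizer_dvd_totient_mul_card_centralizer (P : Subgroup G) [IsCyclic P] :
    Nat.card (normalizer (P : Set G)) ∣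
      (Nat.card P).totient * Nat.card (centralizer (P : Set G)) := by
  have hker : Nat.card P.normalizerMonoidHom.ker ∣ Nat.card (centralizer (P : Set G)) := by
    rw [normalizerMonoidHom_ker]
    exact card_comap_dvd_of_injective _ _ (subtype_injective _)
  rw [← card_mul_index P.normalizerMonoidHom.ker, index_ker, mul_comm, ← IsCyclic.card_mulAut]
  exact mul_dvd_mul (card_subgroup_dvd_card _) hker

theorem sq_dvd_card_centralizer (hG : p ^ 2 ∣ Nat.card G) {u : G} (hu : orderOf u = p) :
    p ^ 2 ∣ Nat.card (centralizer {u}) := by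
  obtain ⟨R, hR, huR⟩ := Sylow.exists_subgroup_card_pow_prime_le p hG (zpowers u)
    (n := 1) (by rw [Nat.card_zpowers, hu, pow_one]) one_le_two
  have := IsPGroup.isMulCommutative_of_card_eq_prime_sq hR
  rw [← hR]
  refine card_dvd_of_le ((le_centralizer R).trans (centralizer_le ?_))
  simpa using huR

theorem exists_le_card_eq_prime {L : Subgroup G} (hL : p ∣ Nat.card L) :
    ∃ P ≤ L, Nat.card P = p := by
  obtain ⟨u, hu⟩ := exists_prime_orderOf_dvd_card' (G := L) p hL
  exact ⟨zpowers u, zpowers_le.2 u.2, by rw [Nat.card_zpowers, orderOf_coe, hu]⟩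

theorem card_sylow_of_not_sq_dvd (hG : p ∣ Nat.card G) (hG' : ¬ p ^ 2 ∣ Nat.card G)
    (Q : Sylow p G) : Nat.card Q = p := by
  have hp : p.Prime := Fact.out
  rw [hp.dvd_iff_one_le_factorization Nat.card_pos.ne'] at hG
  rw [hp.pow_dvd_iff_le_factorization Nat.card_pos.ne'] at hG'
  rw [Q.card_eq_multiplicity, show (Nat.card G).factorization p = 1 by omega, pow_one]

end Normalizers

namespace OrderSevenHundredTwenty

variable {G : Type*} [Group G] [Finite G] (hG : Nat.card G = 720)
  (hC : ∀ u : G, u ^ 2 ≠ 1 → Nat.card (centralizer {u}) ≤ 10)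
include hG hC

theorem card_normalizer_of_card_eq_five {P : Subgroup G} (hP : Nat.card P = 5) :
    Nat.card (normalizer (P : Set G)) = 20 := by
  have : Fact (Nat.Prime 5) := ⟨Nat.prime_five⟩
  have : IsCyclic P := isCyclic_of_prime_card hP
  obtain ⟨u, hu⟩ := exists_prime_orderOf_dvd_card' (G := P) 5 (by simp [hP])
  have hu2 : (u : G) ^ 2 ≠ 1 := by
    rw [← orderOf_coe] at hu
    rw [Ne, ← orderOf_dvd_iff_pow_eq_one, hu]
    norm_num
  have hcent : Nat.card (centralizer (P : Set G)) ≤ 10 :=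
    (card_le_of_le (centralizer_le (by simp))).trans (hC u hu2)
  have hle := Nat.le_of_dvd (by rw [hP]; exact mul_pos (by decide) Nat.card_pos)
    (card_normalizer_dvd_totient_mul_card_centralizer P)
  have hmod := Sylow.card_normalizer_modEq_card (p := 5) (n := 1) hP
  rw [hP, Nat.totient_prime Fact.out] at hle
  rw [hG, Nat.ModEq] at hmod
  omega

theorem card_ne_forty (L : Subgroup G) : Nat.card L ≠ 40 := fun hL => by
  have : Fact (Nat.Prime 5) := ⟨Nat.prime_five⟩
  obtain ⟨P, hPL, hP⟩ := exists_le_card_eq_prime (L := L) (p := 5) (by rw [hL]; norm_num)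
  have hmod := card_normalizer_inf_modEq_card (p := 5) (n := 1) hP hPL
  have hdvd : Nat.card (normalizer (P : Set G) ⊓ L : Subgroup G) ∣ 20 :=
    card_normalizer_of_card_eq_five hG hC hP ▸ card_dvd_of_le inf_le_left
  have hle := Nat.le_of_dvd (by norm_num) hdvd
  rw [hL, Nat.ModEq] at hmod
  interval_cases Nat.card (normalizer (P : Set G) ⊓ L : Subgroup G) <;> omega

theorem card_centralizer_of_orderOf_eq_three {u : G} (hu : orderOf u = 3) :
    Nat.card (centralizer {u}) = 9 := by
  have hu2 : u ^ 2 ≠ 1 := by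
    rw [Ne, ← orderOf_dvd_iff_pow_eq_one, hu]
    norm_num
  have hle := hC u hu2
  have hdvd := sq_dvd_card_centralizer (by rw [hG]; norm_num) hu
  have hpos : 0 < Nat.card (centralizer {u}) := Nat.card_pos
  omega

theorem card_centralizer_sylow_three_dvd_three {M : Subgroup G} (hM : Nat.card M = 120)
    {Q : Sylow 3 M} (hQ : Nat.card Q = 3) : Nat.card (centralizer (Q : Set M)) ∣ 3 := by
  obtain ⟨u, hu⟩ := exists_prime_orderOf_dvd_card' (G := Q) 3 hQ.symm.dvd
  have hu3 : orderOf (u : G) = 3 := by rw [orderOf_coe, orderOf_coe, hu]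
  have hle : (centralizer (Q : Set M)).map M.subtype ≤ centralizer {(u : G)} := by
    rintro _ ⟨g, hg, rfl⟩
    exact mem_centralizer_singleton_iff.2 (congrArg Subtype.val (hg u u.2)).symm
  have hcent9 : Nat.card (centralizer (Q : Set M)) ∣ 9 := by
    rw [← card_centralizer_of_orderOf_eq_three hG hC hu3,
      ← card_map_of_injective M.subtype_injective]
    exact card_dvd_of_le hle
  have hcent120 := hM ▸ card_subgroup_dvd_card (centralizer (Q : Set M))
  exact Nat.dvd_gcd hcent9 hcent120

theorem normalizer_sylow_three_le_centralizer {M : Subgroup G} (hM : Nat.card M = 120)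
    {Q : Sylow 3 M} (hQ : Nat.card Q = 3) :
    normalizer (Q : Set M) ≤ centralizer (Q : Set M) := by
  have : IsCyclic Q := isCyclic_of_prime_card hQ
  have hnorm6 : Nat.card (normalizer (Q : Set M)) ∣ 6 := by
    have hdvd := card_normalizer_dvd_totient_mul_card_centralizer (Q : Subgroup M)
    rw [hQ] at hdvd
    exact hdvd.trans (mul_dvd_mul_left 2 (card_centralizer_sylow_three_dvd_three hG hC hM hQ))
  have hmod : Nat.card (normalizer (Q : Set M)) ≡ 120 [MOD 9] :=
    hM ▸ Sylow.card_normalizer_modEq_card (p := 3) (n := 1) hQ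
  have hnorm : Nat.card (normalizer (Q : Set M)) = 3 := by
    have hle := Nat.le_of_dvd (by norm_num) hnorm6
    rw [Nat.ModEq] at hmod
    omega
  have heq : (Q : Subgroup M) = normalizer (Q : Set M) :=
    eq_of_le_of_card_ge le_normalizer (hnorm.trans hQ.symm).le
  exact heq.ge.trans (le_centralizer (Q : Subgroup M))

theorem card_ne_one_hundred_twenty (M : Subgroup G) : Nat.card M ≠ 120 := fun hM => by
  let Q : Sylow 3 M := default
  have hQ : Nat.card Q = 3 :=
    card_sylow_of_not_sq_dvd (by rw [hM]; norm_num) (by rw [hM]; norm_num) Q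
  have hnorm := normalizer_sylow_three_le_centralizer hG hC hM hQ
  refine card_ne_forty hG hC ((MonoidHom.transferSylow Q hnorm).ker.map M.subtype) ?_
  have hcompl := (MonoidHom.ker_transferSylow_isComplement' Q hnorm).card_mul_card
  rw [hM, hQ] at hcompl
  rw [card_map_of_injective M.subtype_injective]
  omega

theorem normalizer_eq_of_card_eq_twenty {P D : Subgroup G} (hP : Nat.card P = 5) (hPD : P ≤ D)
    (hD : Nat.card D = 20) : normalizer (P : Set G) = D := by
  have : Fact (Nat.Prime 5) := ⟨Nat.prime_five⟩
  have hnorm := card_normalizer_of_card_eq_five hG hC hP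
  have hmod := card_normalizer_inf_modEq_card (p := 5) (n := 1) hP hPD
  have hle := card_le_of_le (inf_le_left : normalizer (P : Set G) ⊓ D ≤ _)
  rw [hD, Nat.ModEq] at hmod
  have hinf : Nat.card (normalizer (P : Set G) ⊓ D : Subgroup G) = 20 := by omega
  exact (eq_of_le_of_card_ge inf_le_left (hnorm.trans hinf.symm).le).symm.trans
    (eq_of_le_of_card_ge inf_le_right (hD.trans hinf.symm).le)

theorem isCoatom_of_card_eq_twenty {D : Subgroup G} (hD : Nat.card D = 20) : IsCoatom D := by
  have : Fact (Nat.Prime 5) := ⟨Nat.prime_five⟩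
  obtain ⟨P, hPD, hP⟩ := exists_le_card_eq_prime (L := D) (p := 5) (by rw [hD]; norm_num)
  refine ⟨fun h => by simp [h, hG] at hD, fun M hDM => ?_⟩
  have hmod := card_normalizer_inf_modEq_card (p := 5) (n := 1) hP (hPD.trans hDM.le)
  rw [normalizer_eq_of_card_eq_twenty hG hC hP hPD hD, inf_eq_left.2 hDM.le, hD] at hmod
  obtain ⟨k, hk⟩ : 20 ∣ Nat.card M := hD ▸ card_dvd_of_le hDM.le
  have hkG : 20 * k ∣ 720 := by
    rw [← hk, ← hG]
    exact card_subgroup_dvd_card M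
  have hk36 : k ∣ 36 := Nat.dvd_of_mul_dvd_mul_left (by norm_num) hkG
  have hkle := Nat.le_of_dvd (by norm_num) hk36
  have hk1 : k ≠ 1 := fun h => hDM.ne (eq_of_le_of_card_ge hDM.le (by rw [hk, hD, h]))
  have hk6 : k ≠ 6 := fun h => card_ne_one_hundred_twenty hG hC M (by rw [hk, h])
  rw [hk, Nat.ModEq] at hmod
  have hk_eq : k = 36 := by interval_cases k <;> omega
  exact eq_top_of_card_eq M (by rw [hk, hG, hk_eq])

end OrderSevenHundredTwenty

theorem card_comap_of_surjective {G G' : Type*} [Group G] [Group G'] {f : G →* G'}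
    (hf : Function.Surjective f) (H : Subgroup G') :
    Nat.card (H.comap f) = Nat.card f.ker * Nat.card H := by
  rw [← relIndex_bot_left (H.comap f), ← relIndex_mul_relIndex ⊥ f.ker _ bot_le (f.ker_le_comap H),
    relIndex_bot_left, relIndex_ker, map_comap_eq_self_of_surjective hf]

open Matrix
open scoped MatrixGroups

section CommRing

variable {R : Type*} [CommRing R]

section

variable {n : Type*} [Fintype n] [DecidableEq n]

theorem apply_eq_zero_of_mk_eq_one {g : GL n R} (hg : ProjGenLinGroup.mk g = 1) {i j : n}
    (hij : i ≠ j) : g.val i j = 0 := by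
  rw [ProjGenLinGroup.mk_eq_one, GeneralLinearGroup.mem_center_iff_val_mem_range_scalar] at hg
  obtain ⟨c, hc⟩ := hg
  rw [← hc, scalar_apply, diagonal_apply_ne _ hij]

theorem apply_eq_apply_of_mk_eq_one {g : GL n R} (hg : ProjGenLinGroup.mk g = 1) (i j : n) :
    g.val i i = g.val j j := by
  rw [ProjGenLinGroup.mk_eq_one, GeneralLinearGroup.mem_center_iff_val_mem_range_scalar] at hg
  obtain ⟨c, hc⟩ := hg
  rw [← hc, scalar_apply, diagonal_apply_eq, diagonal_apply_eq]

theorem comap_mk_centralizer_le [IsDomain R] {g : GL n R} (hg : g.val.trace ≠ 0) :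
    (centralizer {ProjGenLinGroup.mk g}).comap ProjGenLinGroup.mk ≤ centralizer {g} := by
  intro h hh
  have hcomm := mem_centralizer_singleton_iff.1 hh
  have hmk : ProjGenLinGroup.mk (h * g * h⁻¹ * g⁻¹) = 1 := by
    simp only [map_mul, map_inv, hcomm, mul_inv_cancel_right, mul_inv_cancel]
  rw [ProjGenLinGroup.mk_eq_one, GeneralLinearGroup.mem_center_iff_val_mem_range_scalar] at hmk
  obtain ⟨c, hc⟩ := hmk
  have hconj : (h * g * h⁻¹).val = c • g.val := by
    rw [← inv_mul_cancel_right (h * g * h⁻¹) g, Units.val_mul, ← hc, smul_eq_diagonal_mul]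
    rfl
  have htrace : g.val.trace = c * g.val.trace := by
    rw [← smul_eq_mul, ← trace_smul, ← hconj, Units.val_mul, Units.val_mul, trace_units_conj]
  obtain rfl : c = 1 := by simpa [hg] using htrace.symm
  rw [one_smul] at hconj
  exact mem_centralizer_singleton_iff.2 (mul_inv_eq_iff_eq_mul.1 (Units.ext hconj))

end

theorem sq_eq_neg_det_of_trace_eq_zero {A : Matrix (Fin 2) (Fin 2) R} (hA : A.trace = 0) :
    A ^ 2 = scalar (Fin 2) (-A.det) := by
  nontriviality R
  have h := aeval_self_charpoly A
  simp only [charpoly_fin_two, hA, map_zero, zero_mul, sub_zero, map_add, map_pow,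
    Polynomial.aeval_X, Polynomial.aeval_C] at h
  rw [map_neg]
  exact eq_neg_of_add_eq_zero_left h

theorem mk_sq_eq_one_of_trace_eq_zero {g : GL (Fin 2) R} (hg : g.val.trace = 0) :
    ProjGenLinGroup.mk g ^ 2 = 1 := by
  rw [← map_pow, ProjGenLinGroup.mk_eq_one,
    GeneralLinearGroup.mem_center_iff_val_mem_range_scalar]
  exact ⟨-g.val.det, (sq_eq_neg_det_of_trace_eq_zero hg).symm⟩

end CommRing

section Field

variable {F : Type*} [Field F]

section

variable {n : Type*} [Fintype n] [DecidableEq n] [Nonempty n]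

variable (F n) in
theorem card_center_GL : Nat.card (center (GL n F)) = Nat.card F - 1 := by
  rw [GeneralLinearGroup.center_eq_range_scalar, ← Nat.card_units]
  refine (Nat.card_congr (Equiv.ofInjective _ ?_)).symm
  intro a b h
  exact Units.ext (Matrix.scalar_inj.1 (congrArg Units.val h))

theorem card_comap_projGenLinGroup_mk (H : Subgroup PGL(n, F)) :
    Nat.card (H.comap ProjGenLinGroup.mk) = (Nat.card F - 1) * Nat.card H := by
  rw [card_comap_of_surjective ProjGenLinGroup.mk_surjective, ProjGenLinGroup.ker_mk,
    card_center_GL]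

end

theorem card_PGL_two [Finite F] : Nat.card PGL(2, F) = Nat.card F * (Nat.card F ^ 2 - 1) := by
  have := Fintype.ofFinite F
  have hmk := card_comap_projGenLinGroup_mk (⊤ : Subgroup PGL(2, F))
  rw [comap_top, card_top, card_top, card_GL_field, ← Nat.card_eq_fintype_card] at hmk
  simp only [Fin.prod_univ_two, Fin.val_zero, Fin.val_one, pow_zero, pow_one] at hmk
  have hq : 0 < Nat.card F - 1 := Nat.sub_pos_of_lt Finite.one_lt_card
  refine Nat.eq_of_mul_eq_mul_left hq (hmk.symm.trans ?_)
  rw [← mul_assoc, mul_comm, sq, ← Nat.sub_one_mul]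

theorem exists_linearIndependent_mulVec {n : Type*} [Fintype n] [DecidableEq n] {A : Matrix n n F}
    (hA : A ∉ Set.range (scalar n)) : ∃ v, LinearIndependent F ![v, A *ᵥ v] := by
  contrapose! hA
  obtain ⟨c, hc⟩ := (toLin' A).exists_eq_smul_id_of_forall_notLinearIndependent hA
  refine ⟨c, toLin'.injective ?_⟩
  rw [hc]
  ext
  simp [Pi.single_apply]

theorem card_centralizer_GL_two_le [Finite F] {g : GL (Fin 2) F} (hg : g ∉ center (GL (Fin 2) F)) :
    Nat.card (centralizer {g}) ≤ Nat.card F ^ 2 := by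
  rw [GeneralLinearGroup.mem_center_iff_val_mem_range_scalar] at hg
  obtain ⟨v, hv⟩ := exists_linearIndependent_mulVec hg
  have hspan : Submodule.span F (Set.range ![v, g.val *ᵥ v]) = ⊤ :=
    hv.span_eq_top_of_card_eq_finrank (by simp)
  have hinj : Function.Injective fun h : centralizer {g} => (h : GL (Fin 2) F).val *ᵥ v := by
    intro h k (hhk : (h : GL (Fin 2) F).val *ᵥ v = (k : GL (Fin 2) F).val *ᵥ v)
    have hcomm (x : centralizer {g}) : x.1.val * g.val = g.val * x.1.val :=
      congrArg Units.val (mem_centralizer_singleton_iff.1 x.2)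
    refine Subtype.ext (Units.ext (toLin'.injective (LinearMap.ext_on_range hspan ?_)))
    intro j
    fin_cases j
    · simpa using hhk
    · change h.1.val *ᵥ g.val *ᵥ v = k.1.val *ᵥ g.val *ᵥ v
      simp only [mulVec_mulVec, hcomm]
      simp only [← mulVec_mulVec, hhk]
  simpa [Nat.card_pi] using Nat.card_le_card_of_injective _ hinj

theorem card_centralizer_PGL_two_mul_le [Finite F] {u : PGL(2, F)} (hu : u ^ 2 ≠ 1) :
    (Nat.card F - 1) * Nat.card (centralizer {u}) ≤ Nat.card F ^ 2 := by
  obtain ⟨g, rfl⟩ := ProjGenLinGroup.mk_surjective u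
  have hcenter : g ∉ center (GL (Fin 2) F) := fun h =>
    hu (by rw [ProjGenLinGroup.mk_eq_one.2 h, one_pow])
  have htrace : g.val.trace ≠ 0 := fun h => hu (mk_sq_eq_one_of_trace_eq_zero h)
  rw [← card_comap_projGenLinGroup_mk]
  exact (card_le_of_le (comap_mk_centralizer_le htrace)).trans (card_centralizer_GL_two_le hcenter)

end Field

section CharThree

variable {F : Type*} [Field F] [CharP F 3] {i : F} {L R T : GL (Fin 2) F}

theorem orderOf_mk_mul_mk_eq_ten (hi : i ^ 2 = -1) (hR : R.val = !![0, 1 + i; -1, 0])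
    (hT : T.val = !![1, 1; 1, -1]) :
    orderOf (ProjGenLinGroup.mk R * ProjGenLinGroup.mk T) = 10 := by
  have : (3 : F) = 0 := CharP.cast_eq_zero F 3
  have hi0 : i ≠ 0 := fun h => by simp [h] at hi
  have hsq : ((R * T) ^ 2).val = !![1, 1 - i; -i, i - 1] := by
    rw [Units.val_pow_eq_pow_val, Units.val_mul, hR, hT, sq]
    ext a b
    fin_cases a <;> fin_cases b <;> simp <;> grind
  have hfive : ((R * T) ^ 5).val = !![i, 1; i - 1, -i] := by
    rw [show 5 = 2 + 2 + 1 from rfl, pow_succ, pow_add, Units.val_mul, Units.val_mul, hsq,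
      Units.val_mul, hR, hT]
    ext a b
    fin_cases a <;> fin_cases b <;> simp <;> grind
  rw [← map_mul]
  have h2 : ProjGenLinGroup.mk (R * T) ^ 2 ≠ 1 := fun h => by
    have hentry := apply_eq_zero_of_mk_eq_one (map_pow ProjGenLinGroup.mk (R * T) 2 ▸ h) one_ne_zero
    simp [hsq, hi0] at hentry
  have h5 : ProjGenLinGroup.mk (R * T) ^ 5 ≠ 1 := fun h => by
    have hentry := apply_eq_zero_of_mk_eq_one (map_pow ProjGenLinGroup.mk (R * T) 5 ▸ h) zero_ne_one
    simp [hfive] at hentry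
  have h10 : ProjGenLinGroup.mk (R * T) ^ 10 = 1 := by
    rw [show 10 = 5 * 2 from rfl, pow_mul, ← map_pow]
    exact mk_sq_eq_one_of_trace_eq_zero (by simp [hfive, trace_fin_two])
  refine orderOf_eq_of_pow_and_pow_div_prime (by norm_num) h10 fun p hp hpd => ?_
  obtain rfl | rfl : p = 2 ∨ p = 5 := by
    rwa [show 10 = 2 * 5 from rfl, hp.dvd_mul, Nat.prime_dvd_prime_iff_eq hp Nat.prime_two,
      Nat.prime_dvd_prime_iff_eq hp Nat.prime_five] at hpd
  exacts [h5, h2]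

theorem mk_mul_mk_mul_mk_pow_twenty_ne_one (hi : i ^ 2 = -1)
    (hL : L.val = !![-1, 1; 1, 1]) (hR : R.val = !![0, 1 + i; -1, 0])
    (hT : T.val = !![1, 1; 1, -1]) :
    (ProjGenLinGroup.mk L * ProjGenLinGroup.mk T * ProjGenLinGroup.mk R) ^ 20 ≠ 1 := fun h => by
  have h3 : (3 : F) = 0 := CharP.cast_eq_zero F 3
  have hLTR : (L * T * R).val = diagonal ![-1, -(1 + i)] := by
    rw [Units.val_mul, Units.val_mul, hL, hT, hR]
    ext a b
    fin_cases a <;> fin_cases b <;> simp <;> grind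
  have heq := apply_eq_apply_of_mk_eq_one (g := (L * T * R) ^ 20) (by simpa using h) 0 1
  simp only [Units.val_pow_eq_pow_val, hLTR, diagonal_pow, diagonal_apply_eq] at heq
  have hneg : (1 : F) = -1 :=
    calc (1 : F) = (-1) ^ 20 := by norm_num
      _ = (-(1 + i)) ^ 20 := heq
      _ = ((1 + i) ^ 4) ^ 5 := by ring
      _ = -1 := by rw [show (1 + i) ^ 4 = -1 by grind]; norm_num
  exact one_ne_zero (by linear_combination h3 - hneg : (1 : F) = 0)

end CharThree

theorem isCoatom_of_card_eq_twenty_PGL {F : Type*} [Field F] (hF : Nat.card F = 9)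
    {D : Subgroup PGL(2, F)} (hD : Nat.card D = 20) : IsCoatom D := by
  have : Finite F := Nat.finite_of_card_ne_zero (by omega)
  have : Finite PGL(2, F) := .of_surjective _ ProjGenLinGroup.mk_surjective
  refine OrderSevenHundredTwenty.isCoatom_of_card_eq_twenty
    (by norm_num [card_PGL_two, hF]) (fun u hu => ?_) hD
  have hle := card_centralizer_PGL_two_mul_le hu
  rw [hF] at hle
  omega

/-- With `λ, ρ, τ` the images in `PGL(2,9)` of the given matrices, `⟨ρ,τ⟩` is a dihedral
group of order 20, it is a maximal subgroup of `PGL(2,9)`, and `λ ∉ ⟨ρ,τ⟩`. -/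
theorem stmt10 (i : F9) (hi : i ^ 2 = -1)
    (Ml Mr Mt : Matrix.GeneralLinearGroup (Fin 2) F9)
    (hMl : (Ml : Matrix (Fin 2) (Fin 2) F9) = !![-1, 1; 1, 1])
    (hMr : (Mr : Matrix (Fin 2) (Fin 2) F9) = !![0, 1 + i; -1, 0])
    (hMt : (Mt : Matrix (Fin 2) (Fin 2) F9) = !![1, 1; 1, -1]) :
    Nonempty ((Subgroup.closure {(QuotientGroup.mk Mr : PGL29), QuotientGroup.mk Mt} :
        Subgroup PGL29) ≃* DihedralGroup 10) ∧
    Subgroup.closure {(QuotientGroup.mk Mr : PGL29), QuotientGroup.mk Mt} ≠ ⊤ ∧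
    (∀ M : Subgroup PGL29,
      Subgroup.closure {(QuotientGroup.mk Mr : PGL29), QuotientGroup.mk Mt} < M → M = ⊤) ∧
    (QuotientGroup.mk Ml : PGL29) ∉
      Subgroup.closure {(QuotientGroup.mk Mr : PGL29), QuotientGroup.mk Mt} := by
  have hF9 : Nat.card F9 = 9 := GaloisField.card 3 2 two_ne_zero
  let ρ : PGL(2, F9) := ProjGenLinGroup.mk Mr
  let τ : PGL(2, F9) := ProjGenLinGroup.mk Mt
  change Nonempty (closure {ρ, τ} ≃* DihedralGroup 10) ∧ closure {ρ, τ} ≠ ⊤ ∧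
    (∀ M, closure {ρ, τ} < M → M = ⊤) ∧ ProjGenLinGroup.mk Ml ∉ closure {ρ, τ}
  have hρ : ρ ^ 2 = 1 := mk_sq_eq_one_of_trace_eq_zero (by simp [hMr, trace_fin_two])
  have hτ : τ ^ 2 = 1 := mk_sq_eq_one_of_trace_eq_zero (by simp [hMt, trace_fin_two])
  have hord : orderOf (ρ * τ) = 10 := orderOf_mk_mul_mk_eq_ten hi hMr hMt
  have hρτ : (ρ * τ) ^ 2 ≠ 1 := pow_ne_one_of_lt_orderOf two_ne_zero (by omega)
  obtain ⟨e⟩ :=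
    nonempty_closure_involutions_mulEquiv_dihedralGroup (sq ρ ▸ hρ) (sq τ ▸ hτ) hρτ
  rw [hord] at e
  have hcard : Nat.card (closure {ρ, τ}) = 20 :=
    (Nat.card_congr e.toEquiv).trans DihedralGroup.nat_card
  have hcoatom := isCoatom_of_card_eq_twenty_PGL hF9 hcard
  refine ⟨⟨e⟩, hcoatom.1, hcoatom.2, fun hMl_mem => ?_⟩
  have hmem : ProjGenLinGroup.mk Ml * τ * ρ ∈ closure {ρ, τ} :=
    mul_mem (mul_mem hMl_mem (subset_closure (by simp))) (subset_closure (by simp))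
  refine mk_mul_mk_mul_mk_pow_twenty_ne_one hi hMl hMr hMt ?_
  exact hcard ▸ orderOf_dvd_iff_pow_eq_one.1 (orderOf_dvd_natCard _ hmem)
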